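/- arXiv:1309.6090 — 2 statements merged into one kernel-verified Lean document; each statement's English description precedes it below -/
import Mathlib

section
/- Let G be a controllable graph on n vertices with adjacency matrix A (over the rationals), and let H be any graph on n vertices with adjacency matrix B. Then the characteristic polynomial of B equals that of A and the characteristic polynomial of the adjacency matrix of the complement of H equals that of the complement of G if and only if there exists a rational orthogonal n×n matrix Q with Qe = e and QᵀAQ = B, where e is the all-ones vector. -/
open Matrix

open scoped Classical in
/-- The (0,1)-adjacency matrix of a simple graph on `Fin n`, with entries in `R`. -/
noncomputable def adjMat {n : ℕ} (R : Type*) [Zero R] [One R] (G : SimpleGraph (Fin n)) :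
    Matrix (Fin n) (Fin n) R :=
  Matrix.of fun i j => if G.Adj i j then 1 else 0

/-- The walk matrix `W = [e, Ae, A²e, …, A^{n−1}e]` of a square matrix `A`,
where `e` is the all-ones vector: the `j`-th column is `A^j e`. -/
noncomputable def walkMatrix {R : Type*} [CommRing R] {n : ℕ} (A : Matrix (Fin n) (Fin n) R) :
    Matrix (Fin n) (Fin n) R :=
  Matrix.of fun i j => (A ^ (j : ℕ) *ᵥ fun _ => 1) i

section GeneratingFunction

variable {m R : Type*} [Fintype m] [DecidableEq m] [CommRing R]

/-- The generating function `∑ Mᵏ Xᵏ` of the powers of `M`, as a matrix of power series. -/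
noncomputable def Matrix.powGenFun (M : Matrix m m R) : Matrix m m (PowerSeries R) :=
  Matrix.of fun i j => PowerSeries.mk fun k => (M ^ k) i j

theorem Matrix.one_sub_X_smul_mul_powGenFun (M : Matrix m m R) :
    (1 - (PowerSeries.X : PowerSeries R) • M.map (PowerSeries.C (R := R))) * M.powGenFun = 1 := by
  rw [sub_mul, one_mul, sub_eq_iff_eq_add, Matrix.smul_mul]
  ext i j k
  rcases k with _ | k
  · by_cases h : i = j <;> simp [powGenFun, h]
  · have h1 : PowerSeries.coeff (k + 1) ((1 : Matrix m m (PowerSeries R)) i j) = 0 := by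
      by_cases h : i = j <;> simp [Matrix.one_apply, h, PowerSeries.coeff_one]
    simp only [Matrix.add_apply, map_add, h1, zero_add, Matrix.smul_apply, smul_eq_mul,
      PowerSeries.coeff_succ_X_mul]
    simp [powGenFun, Matrix.mul_apply, pow_succ']

theorem Matrix.coe_charpolyRev (M : Matrix m m R) :
    (M.charpolyRev : PowerSeries R) =
      (1 - (PowerSeries.X : PowerSeries R) • M.map (PowerSeries.C (R := R))).det := by
  rw [charpolyRev, ← Polynomial.coeToPowerSeries.ringHom_apply, RingHom.map_det]
  congr 1
  ext1 i j
  by_cases h : i = j <;> simp [h, PowerSeries.X_mul]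

theorem Matrix.charpolyRev_neg (M : Matrix m m R) :
    (-M).charpolyRev = M.charpolyRev.comp (-Polynomial.X) := by
  rw [charpolyRev, charpolyRev, ← Polynomial.coe_compRingHom_apply, RingHom.map_det]
  congr 1
  ext1 i j
  by_cases h : i = j <;> simp [h]

/-- The reversed characteristic polynomial of a rank one perturbation. -/
theorem Matrix.coe_charpolyRev_add_vecMulVec (M : Matrix m m R) (u v : m → R) :
    ((M + vecMulVec u v).charpolyRev : PowerSeries R) =
      (M.charpolyRev : PowerSeries R) *
        (1 - PowerSeries.X * PowerSeries.mk fun k => v ⬝ᵥ (M ^ k *ᵥ u)) := by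
  have hN := M.one_sub_X_smul_mul_powGenFun
  rw [coe_charpolyRev, coe_charpolyRev]
  set P := 1 - (PowerSeries.X : PowerSeries R) • M.map (PowerSeries.C (R := R)) with hP
  have hdet : IsUnit P.det := (Matrix.isUnit_iff_isUnit_det _).1 (IsUnit.of_mul_eq_one _ hN)
  have key := Matrix.det_add_replicateCol_mul_replicateRow (ι := Unit) hdet
    (fun i => -PowerSeries.X * PowerSeries.C (u i)) (fun i => PowerSeries.C (v i))
  have hsum : 1 - (PowerSeries.X : PowerSeries R) •
        (M + vecMulVec u v).map (PowerSeries.C (R := R)) =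
      P + replicateCol Unit (fun i => -PowerSeries.X * PowerSeries.C (u i)) *
        replicateRow Unit (fun i => PowerSeries.C (v i)) := by
    ext1 i j
    simp [hP, Matrix.mul_apply, vecMulVec_apply]
    ring
  rw [hsum, key, Matrix.inv_eq_right_inv hN, det_unique (n := Unit)]
  congr 1
  simp only [Matrix.add_apply, Matrix.one_apply_eq, sub_eq_add_neg, add_right_inj]
  have hmk : (PowerSeries.mk fun k => v ⬝ᵥ (M ^ k *ᵥ u)) =
      ∑ i, ∑ j, PowerSeries.C (v i) * M.powGenFun i j * PowerSeries.C (u j) := by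
    ext k
    simp [powGenFun, dotProduct, mulVec, Finset.mul_sum, mul_assoc]
  rw [hmk, Matrix.mul_apply, Finset.sum_comm, Finset.mul_sum, ← Finset.sum_neg_distrib]
  refine Finset.sum_congr rfl fun j _ => ?_
  rw [Matrix.mul_apply, Finset.sum_mul, Finset.mul_sum, ← Finset.sum_neg_distrib]
  refine Finset.sum_congr rfl fun i _ => ?_
  simp only [replicateRow_apply, replicateCol_apply]
  ring

theorem Matrix.charpolyRev_eq_of_charpoly_eq {M N : Matrix m m R}
    (h : M.charpoly = N.charpoly) : M.charpolyRev = N.charpolyRev := by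
  rw [← reverse_charpoly, ← reverse_charpoly, h]

theorem Matrix.charpolyRev_ne_zero [Nontrivial R] (M : Matrix m m R) : M.charpolyRev ≠ 0 := by
  intro h
  simpa [h] using M.eval_charpolyRev

/-- Cospectral matrices whose perturbations by the same rank one pattern are cospectral have
the same moments. -/
theorem Matrix.dotProduct_pow_mulVec_eq [IsDomain R] {M N : Matrix m m R} {u v : m → R}
    (h : M.charpolyRev = N.charpolyRev)
    (h' : (M + vecMulVec u v).charpolyRev = (N + vecMulVec u v).charpolyRev) (k : ℕ) :
    v ⬝ᵥ (M ^ k *ᵥ u) = v ⬝ᵥ (N ^ k *ᵥ u) := by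
  have hM := M.coe_charpolyRev_add_vecMulVec u v
  rw [h', N.coe_charpolyRev_add_vecMulVec u v, h] at hM
  have hne : (N.charpolyRev : PowerSeries R) ≠ 0 := by
    simpa using N.charpolyRev_ne_zero
  have hk := mul_left_cancel₀ PowerSeries.X_ne_zero (sub_right_injective (mul_left_cancel₀ hne hM))
  simpa using (congrArg (PowerSeries.coeff k) hk).symm

end GeneratingFunction

theorem adjMat_transpose {n : ℕ} (R : Type*) [Zero R] [One R] (G : SimpleGraph (Fin n)) :
    (adjMat R G)ᵀ = adjMat R G := by
  ext i j
  by_cases h : G.Adj i j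
  · simp [adjMat, h, h.symm]
  · simp [adjMat, h, mt G.adj_symm h]

theorem adjMat_compl {n : ℕ} (R : Type*) [CommRing R] (G : SimpleGraph (Fin n)) :
    adjMat R Gᶜ = vecMulVec (fun _ => 1) (fun _ => 1) - 1 - adjMat R G := by
  ext i j
  by_cases h : i = j
  · simp [adjMat, vecMulVec_apply, h]
  · by_cases h' : G.Adj i j <;> simp [adjMat, vecMulVec_apply, h, h']

theorem charpolyRev_adjMat_sub_vecMulVec {n : ℕ} {G H : SimpleGraph (Fin n)} {R : Type*}
    [CommRing R] (h : (adjMat R Hᶜ).charpoly = (adjMat R Gᶜ).charpoly) :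
    (adjMat R H + vecMulVec (fun _ => -1) (fun _ => 1)).charpolyRev =
      (adjMat R G + vecMulVec (fun _ => -1) (fun _ => 1)).charpolyRev := by
  have key (K : SimpleGraph (Fin n)) : adjMat R K + vecMulVec (fun _ => -1) (fun _ => 1) =
      -(adjMat R Kᶜ - scalar (Fin n) (-1)) := by
    rw [adjMat_compl]
    ext i j
    by_cases hij : i = j <;> simp [vecMulVec_apply, hij] <;> ring
  rw [key, key, charpolyRev_neg, charpolyRev_neg]
  congr 1
  apply charpolyRev_eq_of_charpoly_eq
  rw [charpoly_sub_scalar, charpoly_sub_scalar, h]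

theorem walkMatrix_transpose_mul_pow_mul_apply {R : Type*} [CommRing R] {n : ℕ}
    {A : Matrix (Fin n) (Fin n) R} (hA : Aᵀ = A) (k : ℕ) (i j : Fin n) :
    ((walkMatrix A)ᵀ * A ^ k * walkMatrix A) i j =
      (fun _ => 1) ⬝ᵥ (A ^ (i + k + j : ℕ) *ᵥ fun _ => 1) := by
  have hcol (j : Fin n) : (walkMatrix A).col j = A ^ (j : ℕ) *ᵥ fun _ => 1 := rfl
  calc ((walkMatrix A)ᵀ * A ^ k * walkMatrix A) i j
      = (A ^ (i : ℕ) *ᵥ fun _ => 1) ⬝ᵥ (A ^ k *ᵥ (A ^ (j : ℕ) *ᵥ fun _ => 1)) := by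
        rw [Matrix.mul_assoc]; rfl
    _ = _ := by
        rw [← vecMul_transpose, transpose_pow, hA, ← dotProduct_mulVec, mulVec_mulVec,
          mulVec_mulVec, pow_add, pow_add, Matrix.mul_assoc]

theorem walkMatrix_mulVec_single_zero {R : Type*} [CommRing R] {n : ℕ} [NeZero n]
    (A : Matrix (Fin n) (Fin n) R) :
    walkMatrix A *ᵥ Pi.single 0 1 = fun _ => 1 := by
  ext i
  simp [walkMatrix]

/-- Symmetric matrices with equal walk moments, one of them controllable, are conjugate by an
orthogonal matrix fixing the all-ones vector. -/
theorem exists_orthogonal_of_walk_moments_eq {K : Type*} [Field K] {n : ℕ}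
    {A B : Matrix (Fin n) (Fin n) K} (hA : Aᵀ = A) (hB : Bᵀ = B)
    (hctrl : (walkMatrix A).det ≠ 0)
    (hw : ∀ k : ℕ, (fun _ => 1) ⬝ᵥ (A ^ k *ᵥ fun _ => 1) =
      (fun _ => 1) ⬝ᵥ (B ^ k *ᵥ fun _ => 1)) :
    ∃ Q : Matrix (Fin n) (Fin n) K,
      Qᵀ * Q = 1 ∧ Q *ᵥ (fun _ => 1) = (fun _ => 1) ∧ Qᵀ * A * Q = B := by
  have hgram (k : ℕ) : (walkMatrix A)ᵀ * A ^ k * walkMatrix A =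
      (walkMatrix B)ᵀ * B ^ k * walkMatrix B := by
    ext i j
    rw [walkMatrix_transpose_mul_pow_mul_apply hA, walkMatrix_transpose_mul_pow_mul_apply hB, hw]
  have h0 := hgram 0
  have h1 := hgram 1
  simp only [pow_zero, pow_one, Matrix.mul_one] at h0 h1
  have hdetB : IsUnit (walkMatrix B).det := by
    have hdet := congrArg det h0
    rw [det_mul, det_mul, det_transpose, det_transpose] at hdet
    exact isUnit_iff_ne_zero.2 fun h => hctrl (by simpa [h] using hdet)
  set W := walkMatrix A
  set V := walkMatrix B
  have hV : V * V⁻¹ = 1 := mul_nonsing_inv V hdetB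
  have hV' : V⁻¹ᵀ * Vᵀ = 1 := by rw [← transpose_mul, hV, transpose_one]
  refine ⟨W * V⁻¹, ?_, ?_, ?_⟩
  · calc (W * V⁻¹)ᵀ * (W * V⁻¹) = V⁻¹ᵀ * (Wᵀ * W) * V⁻¹ := by
          simp only [transpose_mul, Matrix.mul_assoc]
      _ = (V⁻¹ᵀ * Vᵀ) * (V * V⁻¹) := by rw [h0]; simp only [Matrix.mul_assoc]
      _ = 1 := by rw [hV, hV', Matrix.mul_one]
  · rcases n.eq_zero_or_pos with rfl | hn
    · exact Subsingleton.elim _ _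
    · have : NeZero n := ⟨hn.ne'⟩
      calc (W * V⁻¹) *ᵥ (fun _ => 1) = (W * V⁻¹) *ᵥ (V *ᵥ Pi.single 0 1) := by
            rw [walkMatrix_mulVec_single_zero]
        _ = W *ᵥ Pi.single 0 1 := by
            rw [mulVec_mulVec, Matrix.mul_assoc, nonsing_inv_mul V hdetB, Matrix.mul_one]
        _ = fun _ => 1 := walkMatrix_mulVec_single_zero A
  · calc (W * V⁻¹)ᵀ * A * (W * V⁻¹) = V⁻¹ᵀ * (Wᵀ * A * W) * V⁻¹ := by
          simp only [transpose_mul, Matrix.mul_assoc]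
      _ = (V⁻¹ᵀ * Vᵀ) * B * (V * V⁻¹) := by rw [h1]; simp only [Matrix.mul_assoc]
      _ = B := by rw [hV, hV', Matrix.mul_one, Matrix.one_mul]

theorem charpoly_transpose_mul_mul_of_orthogonal {m R : Type*} [Fintype m] [DecidableEq m]
    [CommRing R] {Q : Matrix m m R} (hQ : Qᵀ * Q = 1) (M : Matrix m m R) :
    (Qᵀ * M * Q).charpoly = M.charpoly := by
  rw [charpoly_mul_comm, ← Matrix.mul_assoc, mul_eq_one_comm.1 hQ, Matrix.one_mul]

theorem transpose_mul_adjMat_compl_mul {R : Type*} [CommRing R] {n : ℕ}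
    {G H : SimpleGraph (Fin n)} {Q : Matrix (Fin n) (Fin n) R} (hQ : Qᵀ * Q = 1)
    (hQe : Q *ᵥ (fun _ => 1) = fun _ => 1) (hGH : Qᵀ * adjMat R G * Q = adjMat R H) :
    Qᵀ * adjMat R Gᶜ * Q = adjMat R Hᶜ := by
  have hQe' : Qᵀ *ᵥ (fun _ => 1) = fun _ => 1 := by
    conv_lhs => rw [← hQe]
    rw [mulVec_mulVec, hQ, one_mulVec]
  rw [adjMat_compl, adjMat_compl, Matrix.mul_sub, Matrix.mul_sub, Matrix.sub_mul, Matrix.sub_mul,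
    hGH, Matrix.mul_one, hQ, mul_vecMulVec, vecMulVec_mul, hQe', ← mulVec_transpose, hQe']

/-- For a controllable graph `G`, a graph `H` is cospectral with `G`
with cospectral complements iff there is a rational orthogonal matrix `Q` with `Qe = e`
and `QᵀA(G)Q = A(H)`. -/
theorem stmt_0 {n : ℕ} (G H : SimpleGraph (Fin n))
    (A : Matrix (Fin n) (Fin n) ℚ) (hA : A = adjMat ℚ G)
    (B : Matrix (Fin n) (Fin n) ℚ) (hB : B = adjMat ℚ H)
    (hctrl : (walkMatrix A).det ≠ 0) :
    (B.charpoly = A.charpoly ∧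
        (adjMat ℚ (Hᶜ)).charpoly = (adjMat ℚ (Gᶜ)).charpoly) ↔
      ∃ Q : Matrix (Fin n) (Fin n) ℚ,
        Qᵀ * Q = 1 ∧ Q *ᵥ (fun _ => 1) = (fun _ => 1) ∧ Qᵀ * A * Q = B := by
  subst hA hB
  constructor
  · rintro ⟨h, hc⟩
    refine exists_orthogonal_of_walk_moments_eq (adjMat_transpose ℚ G) (adjMat_transpose ℚ H)
      hctrl fun k => ?_
    have hneg : (fun _ : Fin n => (-1 : ℚ)) = -fun _ => 1 := rfl
    have hk := dotProduct_pow_mulVec_eq (charpolyRev_eq_of_charpoly_eq h)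
      (charpolyRev_adjMat_sub_vecMulVec hc) k
    rw [hneg, mulVec_neg, mulVec_neg, dotProduct_neg, dotProduct_neg] at hk
    exact (neg_injective hk).symm
  · rintro ⟨Q, hQ, hQe, hGH⟩
    rw [← transpose_mul_adjMat_compl_mul hQ hQe hGH, ← hGH]
    exact ⟨charpoly_transpose_mul_mul_of_orthogonal hQ _,
      charpoly_transpose_mul_mul_of_orthogonal hQ _⟩
end

section
/- Let G be a controllable graph on n vertices with adjacency matrix A and walk matrix W. Let Q be a rational orthogonal matrix with Qe = e such that QᵀAQ is a symmetric (0,1)-matrix with zero diagonal, with level ℓ, and let p be an odd prime. If p divides det(W) but p² does not divide det(W), then p does not divide ℓ. -/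
open Matrix

/-- Two vectors in the left kernel of `M` modulo a prime `p` are proportional modulo `p`,
provided that `p ^ 2` does not divide `det M`. -/
lemma dvd_cross_of_dvd_vecMul {ι : Type*} [Fintype ι] [DecidableEq ι] {M : Matrix ι ι ℤ} {p : ℤ}
    (hp : Prime p) (hdet : ¬ p ^ 2 ∣ M.det) {u v : ι → ℤ} (hu : ∀ j, p ∣ (u ᵥ* M) j)
    (hv : ∀ j, p ∣ (v ᵥ* M) j) {i : ι} (hi : ¬ p ∣ u i) (j : ι) :
    p ∣ u i * v j - v i * u j := by
  by_contra hj
  obtain ⟨w, hw⟩ : ∃ w : ι → ℤ, w = u i • v - v i • u := ⟨_, rfl⟩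
  have hwi : w i = 0 := by simp [hw, mul_comm]
  have hwj : ¬ p ∣ w j := by simpa [hw] using hj
  choose a ha using hu
  have hwM : ∀ k, p ∣ (w ᵥ* M) k := fun k => by
    rw [hw, sub_vecMul, smul_vecMul, smul_vecMul]
    exact dvd_sub ((hv k).mul_left _) ((Dvd.intro _ (ha k).symm).mul_left _)
  choose b hb using hwM
  have key : ∀ (N : Matrix ι ι ℤ) (x c : ι → ℤ) (k : ι), x ᵥ* N = p • c →
      x k * N.det = p * (N.updateRow k c).det := by
    intro N x c k h
    rw [← det_updateRow_smul, ← h, vecMul_eq_sum, ← smul_eq_mul, ← det_updateRow_sum]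
  have h₁ := key M u a i (by ext k; simp [ha k])
  have h₂ := key (M.updateRow i a) w b j (by
    ext k
    rw [Pi.smul_apply, smul_eq_mul, ← hb k]
    refine Finset.sum_congr rfl fun l _ => ?_
    by_cases hl : l = i
    · subst hl; simp [hwi]
    · simp [updateRow_ne hl])
  have h₃ : p ^ 2 ∣ (u i * w j) * M.det :=
    ⟨((M.updateRow i a).updateRow j b).det, by linear_combination w j * h₁ + p * h₂⟩
  have hc : IsCoprime (p ^ 2) (u i * w j) := by
    refine IsCoprime.pow_left (IsCoprime.mul_right ?_ ?_) <;>
      rwa [hp.irreducible.coprime_iff_not_dvd]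
  exact hdet (hc.dvd_of_dvd_mul_left h₃)

/-- If the left kernel of `M` is spanned by `x`, the range of `M` contains `xᗮ`. -/
lemma exists_mulVec_eq_of_dotProduct_eq_zero {ι K : Type*} [Fintype ι] [DecidableEq ι] [Field K]
    {M : Matrix ι ι K} {x : ι → K} (hx : ∀ y, y ᵥ* M = 0 → ∃ c : K, y = c • x)
    {g : ι → K} (hg : x ⬝ᵥ g = 0) : ∃ y, M *ᵥ y = g := by
  by_contra h
  have hmem : g ∉ LinearMap.range M.mulVecLin := by
    rintro ⟨y, hy⟩
    exact h ⟨y, hy⟩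
  obtain ⟨f, hfg, hf⟩ := Submodule.exists_le_ker_of_notMem hmem
  obtain ⟨y, rfl⟩ := (dotProductEquiv K ι).surjective f
  have hy : y ᵥ* M = 0 := by
    refine dotProduct_eq_zero _ fun z => ?_
    rw [← dotProduct_mulVec]
    exact hf ⟨z, rfl⟩
  obtain ⟨c, rfl⟩ := hx y hy
  simp [hg] at hfg

/-- If `p ^ 2` does not divide `det M` and `u` is in the left kernel of `M` modulo `p`, every vector
orthogonal to `u` modulo `p` is in the range of `M` modulo `p`. -/
lemma exists_mulVec_add_smul_eq {ι : Type*} [Fintype ι] [DecidableEq ι] {M : Matrix ι ι ℤ} {p : ℕ}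
    (hp : p.Prime) (hdet : ¬ (p : ℤ) ^ 2 ∣ M.det) {u : ι → ℤ} (hu : ∀ j, (p : ℤ) ∣ (u ᵥ* M) j)
    {i : ι} (hi : ¬ (p : ℤ) ∣ u i) {g : ι → ℤ} (hg : (p : ℤ) ∣ u ⬝ᵥ g) :
    ∃ y z : ι → ℤ, g = M *ᵥ y + (p : ℤ) • z := by
  have : Fact p.Prime := ⟨hp⟩
  let φ : ℤ →+* ZMod p := Int.castRingHom (ZMod p)
  have hφ : ∀ a, φ a = 0 ↔ (p : ℤ) ∣ a := fun a => ZMod.intCast_zmod_eq_zero_iff_dvd a p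
  have hsurj : Function.Surjective φ := ZMod.intCast_surjective
  obtain ⟨y, hy⟩ : ∃ y, M.map φ *ᵥ y = φ ∘ g := by
    refine exists_mulVec_eq_of_dotProduct_eq_zero (x := φ ∘ u) (fun v hv => ?_) ?_
    · obtain ⟨v, rfl⟩ : ∃ v' : ι → ℤ, φ ∘ v' = v := hsurj.comp_left v
      have hv' : ∀ j, (p : ℤ) ∣ (v ᵥ* M) j := fun j => by
        rw [← hφ, RingHom.map_vecMul, hv, Pi.zero_apply]
      have hi' : φ (u i) ≠ 0 := by rwa [Ne, hφ]
      refine ⟨φ (v i) / φ (u i), funext fun j => ?_⟩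
      have := (hφ _).2 (dvd_cross_of_dvd_vecMul (Nat.prime_iff_prime_int.1 hp) hdet hu hv' hi j)
      rw [map_sub, map_mul, map_mul, sub_eq_zero] at this
      simp only [Function.comp_apply, Pi.smul_apply, smul_eq_mul]
      field_simp
      linear_combination this
    · rw [← RingHom.map_dotProduct, hφ]
      exact hg
  obtain ⟨y, rfl⟩ : ∃ y' : ι → ℤ, φ ∘ y' = y := hsurj.comp_left y
  have hz : ∀ j, (p : ℤ) ∣ (g - M *ᵥ y) j := fun j => by
    rw [← hφ, Pi.sub_apply, map_sub, RingHom.map_mulVec, hy, Function.comp_apply, sub_self]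
  choose z hz using hz
  refine ⟨y, z, funext fun j => ?_⟩
  have := hz j
  simp only [Pi.sub_apply] at this
  simp only [Pi.add_apply, Pi.smul_apply, smul_eq_mul]
  linear_combination this

/-- If `u` and `c` are nonzero left and right kernel vectors of `M` modulo `p` with
`uᵀMc` divisible by `p ^ 2`, then `p ^ 2` divides `det M`. -/
lemma sq_dvd_det_of_dvd {ι : Type*} [Fintype ι] [DecidableEq ι] {M : Matrix ι ι ℤ} {p : ℕ}
    (hp : p.Prime) {u c : ι → ℤ} (hu : ∀ j, (p : ℤ) ∣ (u ᵥ* M) j) {i : ι} (hi : ¬ (p : ℤ) ∣ u i)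
    (hc : ∀ j, (p : ℤ) ∣ (M *ᵥ c) j) {k : ι} (hk : ¬ (p : ℤ) ∣ c k)
    (huc : (p : ℤ) ^ 2 ∣ u ⬝ᵥ M *ᵥ c) : (p : ℤ) ^ 2 ∣ M.det := by
  by_contra hdet
  have hp0 : (p : ℤ) ≠ 0 := by exact_mod_cast hp.ne_zero
  choose g hg using hc
  have hg' : M *ᵥ c = (p : ℤ) • g := funext hg
  have hug : (p : ℤ) ∣ u ⬝ᵥ g := by
    rw [hg', dotProduct_smul, smul_eq_mul, pow_two] at huc
    exact (mul_dvd_mul_iff_left hp0).1 huc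
  obtain ⟨y, z, rfl⟩ := exists_mulVec_add_smul_eq hp hdet hu hi hug
  have hz : M *ᵥ (c - (p : ℤ) • y) = (p : ℤ) ^ 2 • z := by
    rw [mulVec_sub, hg', mulVec_smul, smul_add, add_sub_cancel_left, smul_smul, pow_two]
  have hdvd : (p : ℤ) ^ 2 ∣ M.det * (c - (p : ℤ) • y) k := by
    have h := congrArg (fun v => (M.adjugate *ᵥ v) k) hz
    simp only [mulVec_mulVec, adjugate_mul, smul_mulVec, one_mulVec, mulVec_smul, Pi.smul_apply,
      smul_eq_mul] at h
    exact ⟨_, h⟩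
  have hcop : IsCoprime ((p : ℤ) ^ 2) ((c - (p : ℤ) • y) k) := by
    refine IsCoprime.pow_left ?_
    rw [(Nat.prime_iff_prime_int.1 hp).irreducible.coprime_iff_not_dvd]
    simp only [Pi.sub_apply, Pi.smul_apply, smul_eq_mul]
    rwa [dvd_sub_left (dvd_mul_right _ _)]
  exact hdet (hcop.dvd_of_dvd_mul_right hdvd)

open Polynomial in
lemma aeval_mulVec_one_eq_walkMatrix_mulVec {R : Type*} [CommRing R] {n : ℕ}
    (A : Matrix (Fin n) (Fin n) R) {f : R[X]} (hf : f.degree < n) :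
    aeval A f *ᵥ (fun _ => 1) = walkMatrix A *ᵥ fun j => f.coeff j := by
  rcases Nat.eq_zero_or_pos n with rfl | hn
  · exact Subsingleton.elim _ _
  have hf' : f.natDegree < n := by
    rcases eq_or_ne f 0 with rfl | h0
    · simpa using hn
    · exact (natDegree_lt_iff_degree_lt h0).2 hf
  rw [aeval_eq_sum_range' hf', ← Fin.sum_univ_eq_sum_range (fun i => f.coeff i • A ^ i), sum_mulVec]
  ext i
  simp [mulVec, dotProduct, walkMatrix, Finset.sum_apply, mul_comm, smul_mulVec]

lemma walkMatrix_map {R S : Type*} [CommRing R] [CommRing S] (φ : R →+* S) {n : ℕ}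
    (A : Matrix (Fin n) (Fin n) R) : walkMatrix (A.map φ) = (walkMatrix A).map φ := by
  ext i j
  simp only [walkMatrix, of_apply, map_apply, RingHom.map_mulVec, ← RingHom.mapMatrix_apply,
    map_pow]
  congr 2
  ext
  simp

open Polynomial in
/-- If `det (walkMatrix A) = 0`, a vector in the column space of the walk matrix is `q(A) e` with
`q` of degree less than `n - 1`. -/
lemma exists_aeval_mulVec_one_eq {K : Type*} [Field K] {n : ℕ} (A : Matrix (Fin n) (Fin n) K)
    (hdet : (walkMatrix A).det = 0) (y : Fin n → K) :
    ∃ q : K[X], q.degree + 1 < n ∧ aeval A q *ᵥ (fun _ => 1) = walkMatrix A *ᵥ y := by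
  classical
  obtain ⟨c, hc0, hc⟩ := exists_mulVec_eq_zero_iff.2 hdet
  have hof : ∀ v : Fin n → K, (fun j : Fin n => (ofFn n v).coeff j) = v := fun v =>
    funext fun j => ofFn_coeff_eq_val_of_lt v j.2
  obtain ⟨f, hf⟩ : ∃ f, f = ofFn n c := ⟨_, rfl⟩
  have hf0 : f ≠ 0 := by
    rintro rfl
    refine hc0 ?_
    rw [← hof c, ← hf]
    ext
    simp
  have hfA : aeval A f *ᵥ (fun _ => 1) = 0 := by
    rw [hf, aeval_mulVec_one_eq_walkMatrix_mulVec A (ofFn_degree_lt c), hof, hc]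
  refine ⟨ofFn n y % f, ?_, ?_⟩
  · have h₁ : (ofFn n y % f).degree < f.degree := degree_mod_lt _ hf0
    have h₂ : f.degree < n := hf ▸ ofFn_degree_lt c
    rcases eq_or_ne (ofFn n y % f) 0 with h0 | h0
    · rw [h0, degree_zero, WithBot.bot_add]
      exact WithBot.bot_lt_coe n
    · rw [degree_eq_natDegree h0, degree_eq_natDegree hf0] at h₁
      rw [degree_eq_natDegree hf0] at h₂
      rw [degree_eq_natDegree h0]
      norm_cast at h₁ h₂ ⊢
      lia
  · have h := congrArg (fun g => aeval A g *ᵥ (fun _ => (1 : K)))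
      (EuclideanDomain.mod_add_div (ofFn n y) f)
    simp only [map_add, mul_comm f, map_mul, add_mulVec, ← mulVec_mulVec, hfA, mulVec_zero,
      add_zero] at h
    rw [h, aeval_mulVec_one_eq_walkMatrix_mulVec A (ofFn_degree_lt y), hof]

open Polynomial in
/-- An eigenvector `u` of `A` modulo `p` that lies in the left kernel of the walk matrix modulo `p`
and is self-orthogonal in a suitable sense forces `p ^ 2` to divide the determinant of the walk
matrix. -/
theorem sq_dvd_det_walkMatrix {n : ℕ} {A : Matrix (Fin n) (Fin n) ℤ} (hA : A.IsSymm) {p : ℕ}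
    (hp : p.Prime) {u β : Fin n → ℤ} {μ : ℤ} (hAu : A *ᵥ u = μ • u + (p : ℤ) • β)
    (hu : ∀ j, (p : ℤ) ∣ (u ᵥ* walkMatrix A) j) {i : Fin n} (hi : ¬ (p : ℤ) ∣ u i)
    (huu : (p : ℤ) ∣ u ⬝ᵥ u) (huβ : (p : ℤ) ∣ u ⬝ᵥ β) : (p : ℤ) ^ 2 ∣ (walkMatrix A).det := by
  by_contra hdet
  have : Fact p.Prime := ⟨hp⟩
  let φ : ℤ →+* ZMod p := Int.castRingHom (ZMod p)
  have hφ : ∀ a, φ a = 0 ↔ (p : ℤ) ∣ a := fun a => ZMod.intCast_zmod_eq_zero_iff_dvd a p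
  have hφu : φ ∘ u ≠ 0 := fun h => hi ((hφ _).1 (congrFun h i))
  have hdet0 : (walkMatrix (A.map φ)).det = 0 := by
    rw [← exists_vecMul_eq_zero_iff]
    refine ⟨φ ∘ u, hφu, funext fun j => ?_⟩
    rw [walkMatrix_map, ← RingHom.map_vecMul, Pi.zero_apply, hφ]
    exact hu j
  obtain ⟨y, z, hyz⟩ := exists_mulVec_add_smul_eq hp hdet hu hi huu
  have hy : walkMatrix (A.map φ) *ᵥ (φ ∘ y) = φ ∘ u := by
    ext j
    rw [walkMatrix_map, ← RingHom.map_mulVec, Function.comp_apply, hyz, Pi.add_apply, map_add,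
      (hφ (((p : ℤ) • z) j)).2 (dvd_mul_right _ _), add_zero]
  obtain ⟨q', hq'deg, hq'⟩ := exists_aeval_mulVec_one_eq (A.map φ) hdet0 (φ ∘ y)
  rw [hy] at hq'
  obtain ⟨q, hq, hqdeg⟩ : ∃ q : ℤ[X], q.map φ = q' ∧ q.degree = q'.degree := by
    refine exists_degree_eq_of_mem_lifts ?_
    rw [lifts_iff_coeff_lifts]
    exact fun k => ZMod.intCast_surjective _
  have hmap : ∀ g : ℤ[X], φ ∘ (aeval A g *ᵥ fun _ => 1) =
      aeval (A.map φ) (g.map φ) *ᵥ (fun _ => 1) := by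
    intro g
    ext j
    rw [Function.comp_apply, RingHom.map_mulVec]
    have : (aeval A g).map φ = aeval (A.map φ) (g.map φ) := by
      rw [← RingHom.mapMatrix_apply, ← RingHom.mapMatrix_apply]
      simp only [aeval_def, hom_eval₂, eval₂_map]
      congr 1
      exact Subsingleton.elim _ _
    rw [this, show (φ ∘ fun _ : Fin n => (1 : ℤ)) = fun _ => 1 from funext fun _ => map_one φ]
  obtain ⟨f, hf⟩ : ∃ f : ℤ[X], f = (X - C μ) * q := ⟨_, rfl⟩
  have hfdeg : f.degree < n := by
    rw [hf, degree_mul, degree_X_sub_C, hqdeg, add_comm]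
    exact hq'deg
  have hfφ : f.map φ ≠ 0 := by
    rw [hf, Polynomial.map_mul, hq]
    refine mul_ne_zero ?_ ?_
    · rw [Polynomial.map_sub, map_X, map_C]
      exact X_sub_C_ne_zero _
    · rintro rfl
      refine hφu ?_
      rw [← hq', map_zero, zero_mulVec]
  obtain ⟨k, hk⟩ : ∃ k : Fin n, ¬ (p : ℤ) ∣ f.coeff k := by
    by_contra! h
    refine hfφ (Polynomial.ext fun k => ?_)
    rw [coeff_map, coeff_zero, hφ]
    by_cases hkn : k < n
    · exact h ⟨k, hkn⟩
    · rw [coeff_eq_zero_of_degree_lt (hfdeg.trans_le (by exact_mod_cast not_lt.1 hkn))]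
      exact dvd_zero _
  have hqA : ∃ z : Fin n → ℤ, aeval A q *ᵥ (fun _ => 1) = u + (p : ℤ) • z := by
    have h : ∀ j, (p : ℤ) ∣ ((aeval A q *ᵥ fun _ => 1) - u) j := fun j => by
      have := congrFun ((hmap q).trans (hq ▸ hq')) j
      rw [← hφ, Pi.sub_apply, map_sub, sub_eq_zero]
      exact this
    choose z hz using h
    refine ⟨z, funext fun j => ?_⟩
    have := hz j
    simp only [Pi.sub_apply] at this
    simp only [Pi.add_apply, Pi.smul_apply, smul_eq_mul]
    linear_combination this
  obtain ⟨w, hw⟩ := hqA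
  have hfA : (walkMatrix A *ᵥ fun j => f.coeff j) =
      A *ᵥ (u + (p : ℤ) • w) - μ • (u + (p : ℤ) • w) := by
    rw [← aeval_mulVec_one_eq_walkMatrix_mulVec A hfdeg, hf, map_mul, ← mulVec_mulVec, hw, map_sub,
      aeval_X, aeval_C, sub_mulVec, Algebra.algebraMap_eq_smul_one, smul_mulVec, one_mulVec]
  refine hdet (sq_dvd_det_of_dvd hp hu hi (c := fun j => f.coeff j) (fun j => ?_) hk ?_)
  · rw [hfA]
    refine ⟨(β + A *ᵥ w - μ • w) j, ?_⟩
    simp only [mulVec_add, hAu, mulVec_smul, Pi.add_apply, Pi.sub_apply, Pi.smul_apply, smul_eq_mul]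
    ring
  · have hsymm : u ⬝ᵥ A *ᵥ (u + (p : ℤ) • w) = (A *ᵥ u) ⬝ᵥ (u + (p : ℤ) • w) := by
      rw [dotProduct_mulVec, ← mulVec_transpose, hA.eq]
    obtain ⟨b, hb⟩ := huβ
    refine ⟨b + β ⬝ᵥ w, ?_⟩
    rw [hfA, dotProduct_sub, hsymm, hAu]
    simp only [add_dotProduct, smul_dotProduct, dotProduct_add, dotProduct_smul, smul_eq_mul]
    rw [dotProduct_comm β u, hb]
    ring

/-- An orthogonal matrix `Q` with `Qe = e` carries the walk matrix of `A` to that of `QᵀAQ`. -/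
lemma transpose_mul_walkMatrix {R : Type*} [CommRing R] {n : ℕ} {A Q : Matrix (Fin n) (Fin n) R}
    (hQ : Qᵀ * Q = 1) (hQe : Q *ᵥ (fun _ => 1) = fun _ => 1) :
    Qᵀ * walkMatrix A = walkMatrix (Qᵀ * A * Q) := by
  have hQ' : Q * Qᵀ = 1 := mul_eq_one_comm.1 hQ
  have hsemi : SemiconjBy Qᵀ A (Qᵀ * A * Q) := by
    rw [SemiconjBy, Matrix.mul_assoc (Qᵀ * A), hQ', Matrix.mul_one]
  have he : Qᵀ *ᵥ (fun _ => 1) = fun _ => 1 := by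
    conv_lhs => rw [← hQe]
    rw [mulVec_mulVec, hQ, one_mulVec]
  ext i j
  have h : Qᵀ *ᵥ (A ^ (j : ℕ) *ᵥ fun _ => 1) = (Qᵀ * A * Q) ^ (j : ℕ) *ᵥ fun _ => 1 := by
    rw [mulVec_mulVec, (hsemi.pow_right j).eq, ← mulVec_mulVec, he]
  exact congrFun h i

lemma adjMat_isSymm {n : ℕ} (R : Type*) [Zero R] [One R] (G : SimpleGraph (Fin n)) :
    (adjMat R G).IsSymm := by
  ext i j
  classical exact if_congr (G.adj_comm j i) rfl rfl

lemma adjMat_map {n : ℕ} {R S : Type*} [CommRing R] [CommRing S] (φ : R →+* S)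
    (G : SimpleGraph (Fin n)) : (adjMat R G).map φ = adjMat S G := by
  ext i j
  simp only [adjMat, map_apply, of_apply]
  split_ifs <;> simp

/-- **Theorem 3.1.** Let `p` be an odd prime dividing `det W` exactly once.
Then `p` does not divide the level `ℓ` of any `Q ∈ 𝒬_G`. -/
theorem stmt_4 {n : ℕ} (G : SimpleGraph (Fin n))
    (A : Matrix (Fin n) (Fin n) ℚ) (hA : A = adjMat ℚ G)
    (W : Matrix (Fin n) (Fin n) ℤ) (hW : W = walkMatrix (adjMat ℤ G))
    (hctrl : W.det ≠ 0)
    (Q : Matrix (Fin n) (Fin n) ℚ)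
    (hQorth : Qᵀ * Q = 1) (hQe : Q *ᵥ (fun _ => 1) = fun _ => 1)
    (hsymm : (Qᵀ * A * Q).IsSymm)
    (h01 : ∀ i j, (Qᵀ * A * Q) i j = 0 ∨ (Qᵀ * A * Q) i j = 1)
    (hdiag : ∀ i, (Qᵀ * A * Q) i i = 0)
    (ℓ : ℕ)
    (hlevel : IsLeast {m : ℕ | 0 < m ∧ ∀ i j, ∃ z : ℤ, (m : ℚ) * Q i j = (z : ℚ)} ℓ)
    (p : ℕ) (hp : p.Prime) (hodd : Odd p)
    (hdvd : (p : ℤ) ∣ W.det) (hnsq : ¬ (p : ℤ) ^ 2 ∣ W.det) :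
    ¬ p ∣ ℓ := by
  intro hpl
  obtain ⟨⟨hpos, hint⟩, hmin⟩ := hlevel
  have hpZ : Prime (p : ℤ) := Nat.prime_iff_prime_int.1 hp
  have hplZ : (p : ℤ) ∣ ℓ := Int.natCast_dvd_natCast.2 hpl
  obtain ⟨φ, hφ⟩ : ∃ φ : ℤ →+* ℚ, φ = Int.castRingHom ℚ := ⟨_, rfl⟩
  have hinj : Function.Injective fun M : Matrix (Fin n) (Fin n) ℤ => φ.mapMatrix M :=
    hφ ▸ map_injective Int.cast_injective
  choose P hP using hint
  have hP : φ.mapMatrix (of P) = (ℓ : ℚ) • Q := by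
    ext i j
    simp [hP, hφ]
  have hB : ∀ i j, ∃ b : ℤ, (b : ℚ) = (Qᵀ * A * Q) i j := fun i j => by
    rcases h01 i j with h | h
    · exact ⟨0, by simp [h]⟩
    · exact ⟨1, by simp [h]⟩
  choose B hB using hB
  have hB : φ.mapMatrix (of B) = Qᵀ * A * Q := by
    ext i j
    simp [hB, hφ]
  have hAφ : φ.mapMatrix (adjMat ℤ G) = A := hA ▸ adjMat_map φ G
  have hPt : φ.mapMatrix (of P)ᵀ = (ℓ : ℚ) • Qᵀ := by
    rw [← transpose_smul, ← hP]
    rfl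
  have hQ' : Q * Qᵀ = 1 := mul_eq_one_comm.1 hQorth
  have hAP : adjMat ℤ G * of P = of P * of B := hinj (by
    simp only [map_mul, hP, hB, hAφ, Matrix.mul_smul, Matrix.smul_mul]
    rw [← Matrix.mul_assoc, ← Matrix.mul_assoc, hQ', Matrix.one_mul])
  have hPP : (of P)ᵀ * of P = ((ℓ : ℤ) ^ 2) • 1 := hinj (by
    simp only [map_mul, hP, hPt, Matrix.mul_smul, Matrix.smul_mul, hQorth]
    rw [smul_smul, zsmul_eq_mul, map_mul, map_one, map_intCast, mul_one, ← pow_two]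
    ext i j
    simp [Matrix.smul_apply, Matrix.one_apply, Matrix.intCast_apply])
  have hPW : (of P)ᵀ * W = (ℓ : ℤ) • walkMatrix (of B) := hinj (by
    simp only [map_mul, hPt, hW]
    rw [RingHom.mapMatrix_apply φ (walkMatrix _), ← walkMatrix_map, ← RingHom.mapMatrix_apply, hAφ,
      Matrix.smul_mul, transpose_mul_walkMatrix hQorth hQe, ← hB, RingHom.mapMatrix_apply,
      walkMatrix_map]
    ext i j
    simp only [RingHom.mapMatrix_apply, map_apply, Matrix.smul_apply, smul_eq_mul, map_mul,
      map_natCast])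
  obtain ⟨i, k, hik⟩ : ∃ i k, ¬ (p : ℤ) ∣ P i k := by
    by_contra! h
    obtain ⟨m, rfl⟩ := hpl
    have hm : 0 < m := Nat.pos_of_mul_pos_left hpos
    refine absurd (hmin ⟨hm, fun i j => ?_⟩) (not_le.2 (lt_mul_of_one_lt_left hm hp.one_lt))
    obtain ⟨z, hz⟩ := h i j
    refine ⟨z, mul_left_cancel₀ (Nat.cast_ne_zero.2 hp.ne_zero : (p : ℚ) ≠ 0) ?_⟩
    have := congrFun (congrFun hP i) j
    simp only [hφ, RingHom.mapMatrix_apply, map_apply, of_apply, hz, Matrix.smul_apply, smul_eq_mul,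
      eq_intCast, Int.cast_mul, Int.cast_natCast, Nat.cast_mul] at this
    linear_combination -this
  have hker : ∀ v, ∀ j, (p : ℤ) ∣ ((of P *ᵥ v) ᵥ* W) j := fun v j => by
    rw [← vecMul_transpose, vecMul_vecMul, hPW, vecMul_smul]
    exact hplZ.mul_right _
  obtain ⟨u, hu⟩ : ∃ u, u = of P *ᵥ Pi.single k 1 := ⟨_, rfl⟩
  have hui : ¬ (p : ℤ) ∣ u i := by simpa [hu] using hik
  have hAu : adjMat ℤ G *ᵥ u = of P *ᵥ (of B *ᵥ Pi.single k 1) := by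
    rw [hu, mulVec_mulVec, hAP, mulVec_mulVec]
  have hdot : ∀ v, (p : ℤ) ^ 2 ∣ u ⬝ᵥ of P *ᵥ v := fun v => by
    rw [hu, dotProduct_mulVec, ← mulVec_transpose, mulVec_mulVec, hPP, smul_mulVec, smul_dotProduct]
    exact (pow_dvd_pow_of_dvd hplZ 2).mul_right _
  obtain ⟨a, s, has⟩ := hpZ.irreducible.coprime_iff_not_dvd.2 hui
  obtain ⟨μ, hμ⟩ : ∃ μ, μ = s * (adjMat ℤ G *ᵥ u) i := ⟨_, rfl⟩
  have hβ : ∀ j, (p : ℤ) ∣ (adjMat ℤ G *ᵥ u) j - μ * u j := fun j => by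
    obtain ⟨t, ht⟩ := dvd_cross_of_dvd_vecMul hpZ hnsq (hu ▸ hker _) (hAu ▸ hker _) hui j
    refine ⟨s * t + a * (adjMat ℤ G *ᵥ u) j, ?_⟩
    linear_combination s * ht - (adjMat ℤ G *ᵥ u) j * has - u j * hμ
  choose β hβ using hβ
  have hAβ : adjMat ℤ G *ᵥ u = μ • u + (p : ℤ) • β := funext fun j => by
    simp only [Pi.add_apply, Pi.smul_apply, smul_eq_mul]
    linear_combination hβ j
  have huu : (p : ℤ) ^ 2 ∣ u ⬝ᵥ u := by
    conv => enter [2, 2]; rw [hu]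
    exact hdot _
  have huβ : (p : ℤ) ∣ u ⬝ᵥ β := by
    have h := hdot (of B *ᵥ Pi.single k 1)
    rw [← hAu, hAβ, dotProduct_add, dotProduct_smul, dotProduct_smul, smul_eq_mul, smul_eq_mul,
      dvd_add_right (huu.mul_left _), pow_two] at h
    exact (mul_dvd_mul_iff_left hpZ.ne_zero).1 h
  rw [hW] at hnsq hker
  exact hnsq (sq_dvd_det_walkMatrix (adjMat_isSymm ℤ G) hp hAβ (hu ▸ hker _) hui
    ((dvd_pow_self _ two_ne_zero).trans huu) huβ)
end
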